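/- Let a, b, c be real numbers with a ≥ b ≥ c ≥ 0 and set B = a² + b² + c². Then 2⁶·a²·b²·c²·(a² − b²)⁴·(a² − c²)⁴·(b² − c²)⁴ ≤ (2¹⁸/3¹⁵)·B¹⁵. -/

import Mathlib

/-!
The left-hand side depends only on `x = a²`, `y = b²`, `z = c²`. Put `s = x + y + z`. By AM-GM,
`xyz ≤ (s / 3)³`. The distances `|x - y|`, `|x - z|`, `|y - z|` are at most `x + y`, `x + z`,
`y + z`, so they add up to at most `2s`, and AM-GM bounds their product by `(2s / 3)³`. The claim
is `2⁶` times the first bound times the fourth power of the second.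
-/

section LinearOrderedField

variable {K : Type*} [Field K] [LinearOrder K] [IsStrictOrderedRing K]

theorem mul_mul_le_arith_mean_pow_three {x y z : K} (hx : 0 ≤ x) (hy : 0 ≤ y) (hz : 0 ≤ z) :
    x * y * z ≤ ((x + y + z) / 3) ^ 3 := by
  have gap_eq : ((x + y + z) / 3) ^ 3 - x * y * z =
      ((x + y + z) * ((x - y) ^ 2 + (y - z) ^ 2 + (z - x) ^ 2) / 2 +
        3 * (x * (y - z) ^ 2 + y * (z - x) ^ 2 + z * (x - y) ^ 2)) / 27 := by ring
  rw [← sub_nonneg, gap_eq]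
  positivity

theorem abs_sub_mul_sub_mul_sub_le (x y z : K) :
    |(x - y) * (x - z) * (y - z)| ≤ (2 * (|x| + |y| + |z|) / 3) ^ 3 := by
  have sum_le : |x - y| + |x - z| + |y - z| ≤ 2 * (|x| + |y| + |z|) := by
    linarith [abs_sub x y, abs_sub x z, abs_sub y z]
  calc |(x - y) * (x - z) * (y - z)|
      = |x - y| * |x - z| * |y - z| := by rw [abs_mul, abs_mul]
    _ ≤ ((|x - y| + |x - z| + |y - z|) / 3) ^ 3 :=
        mul_mul_le_arith_mean_pow_three (abs_nonneg _) (abs_nonneg _) (abs_nonneg _)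
    _ ≤ (2 * (|x| + |y| + |z|) / 3) ^ 3 := by gcongr

theorem stmt_8_general (a b c : K) :
    2 ^ 6 * a ^ 2 * b ^ 2 * c ^ 2 * (a ^ 2 - b ^ 2) ^ 4 * (a ^ 2 - c ^ 2) ^ 4 *
        (b ^ 2 - c ^ 2) ^ 4
      ≤ (2 ^ 18 / 3 ^ 15) * (a ^ 2 + b ^ 2 + c ^ 2) ^ 15 := by
  have prod_le : a ^ 2 * b ^ 2 * c ^ 2 ≤ ((a ^ 2 + b ^ 2 + c ^ 2) / 3) ^ 3 :=
    mul_mul_le_arith_mean_pow_three (sq_nonneg a) (sq_nonneg b) (sq_nonneg c)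
  have prod_sub_le : |(a ^ 2 - b ^ 2) * (a ^ 2 - c ^ 2) * (b ^ 2 - c ^ 2)| ≤
      (2 * (a ^ 2 + b ^ 2 + c ^ 2) / 3) ^ 3 := by
    have bound := abs_sub_mul_sub_mul_sub_le (a ^ 2) (b ^ 2) (c ^ 2)
    rwa [abs_sq, abs_sq, abs_sq] at bound
  calc 2 ^ 6 * a ^ 2 * b ^ 2 * c ^ 2 * (a ^ 2 - b ^ 2) ^ 4 * (a ^ 2 - c ^ 2) ^ 4 *
        (b ^ 2 - c ^ 2) ^ 4
      = 2 ^ 6 * (a ^ 2 * b ^ 2 * c ^ 2 *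
          |(a ^ 2 - b ^ 2) * (a ^ 2 - c ^ 2) * (b ^ 2 - c ^ 2)| ^ 4) := by
        rw [Even.pow_abs (by decide), mul_pow, mul_pow]
        simp only [mul_assoc]
    _ ≤ 2 ^ 6 * (((a ^ 2 + b ^ 2 + c ^ 2) / 3) ^ 3 *
          ((2 * (a ^ 2 + b ^ 2 + c ^ 2) / 3) ^ 3) ^ 4) := by gcongr
    _ = (2 ^ 18 / 3 ^ 15) * (a ^ 2 + b ^ 2 + c ^ 2) ^ 15 := by
        generalize a ^ 2 + b ^ 2 + c ^ 2 = s
        ring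

end LinearOrderedField

/-- inequality `eq:disc2`. For reals `a ≥ b ≥ c ≥ 0` and
`B = a² + b² + c²`, we have
`2⁶·a²b²c²·(a²−b²)⁴·(a²−c²)⁴·(b²−c²)⁴ ≤ (2¹⁸/3¹⁵)·B¹⁵`. -/
theorem stmt_8 (a b c : ℝ) (hab : a ≥ b) (hbc : b ≥ c) (hc : c ≥ 0) :
    2 ^ 6 * a ^ 2 * b ^ 2 * c ^ 2 * (a ^ 2 - b ^ 2) ^ 4 * (a ^ 2 - c ^ 2) ^ 4 *
        (b ^ 2 - c ^ 2) ^ 4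
      ≤ (2 ^ 18 / 3 ^ 15) * (a ^ 2 + b ^ 2 + c ^ 2) ^ 15 :=
  stmt_8_general a b c
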